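/- Let ε > 0 and let π be a strategy profile of a finite discounted stochastic game with ‖f(π) − π‖∞ ≤ ε. Then π is a κ-approximate Markov perfect equilibrium with κ = A_max·(√ε'/(1−γ) + R_max√ε' + ε')/(1−γ), where ε' = ε·(1 + A_max R_max/(1−γ)). -/

import Mathlib

/-!
Fix an agent `i` and a state `s`, and let `x b` be the advantage of action `b` at `s`: what the
agent gains by playing `b` once and then following `π`.

The gain `D b` in Nash's map compares `π` with playing `b` at *every* visit to `s`. A sub- or
supersolution of a Bellman equation lies below, respectively above, its solution, which gives
`x b ≤ D b`, and `D b = 0` whenever `x b ≤ 0`. Clearing denominators in `|f π - π| ≤ ε` yields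
`|D b - π b * T| ≤ ε'` with `T = ∑ b, D b`.

Advantages average to zero under `π`, so `∑ b, π b * T * x b = 0`. If `x b ≤ 0`, then
`π b * T ≤ ε'`, so every term is at least `-ε' * Rmax / (1 - γ)`. If `x a ≥ 0`, then the term of
`a` is at least `(x a - ε') * x a`, which is therefore `O(ε')`, and `x a = O(√ε')`. Finally, if all
advantages at all states are at most `c`, then no deviation gains more than `c / (1 - γ)`.
-/

open Finset

/-- A finite discounted stochastic game with `n` agents, `S` states and
action counts `A i` for each agent `i`. -/
structure SG (n S : ℕ) (A : Fin n → ℕ) where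
  P : Fin S → (∀ i, Fin (A i)) → Fin S → ℝ
  r : Fin n → Fin S → (∀ i, Fin (A i)) → ℝ
  Rmax : ℝ
  γ : ℝ
  P_nonneg : ∀ s a s', 0 ≤ P s a s'
  P_sum_one : ∀ s a, ∑ s', P s a s' = 1
  r_nonneg : ∀ i s a, 0 ≤ r i s a
  r_le_Rmax : ∀ i s a, r i s a ≤ Rmax
  γ_nonneg : 0 ≤ γ
  γ_lt_one : γ < 1

namespace SG

variable {n S : ℕ} {A : Fin n → ℕ}

/-- A (behavioral) strategy profile: agent `i` plays at state `s` the distribution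
`π i s` on its actions. -/
abbrev Profile (n S : ℕ) (A : Fin n → ℕ) := ∀ i : Fin n, Fin S → Fin (A i) → ℝ

/-- `π` is a genuine strategy profile: each `π i s` is a probability distribution. -/
def IsProfile (π : Profile n S A) : Prop :=
  (∀ i s a, 0 ≤ π i s a) ∧ ∀ i s, ∑ a, π i s a = 1

/-- `A_max`, the largest number of actions of any agent. -/
def Amax (A : Fin n → ℕ) : ℕ := Finset.univ.sup A

/-- Probability of the joint action `a` at state `s` under profile `π`. -/
def jointProb (π : Profile n S A) (s : Fin S) (a : ∀ i, Fin (A i)) : ℝ :=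
  ∏ i, π i s (a i)

/-- The state-transition matrix `P^π` induced by the profile `π`. -/
noncomputable def Pmat (g : SG n S A) (π : Profile n S A) : Matrix (Fin S) (Fin S) ℝ :=
  fun s s' => ∑ a, jointProb π s a * g.P s a s'

/-- Expected one-step reward `r^{i,π}(s)` of agent `i` at state `s` under `π`. -/
noncomputable def rvec (g : SG n S A) (π : Profile n S A) (i : Fin n) (s : Fin S) : ℝ :=
  ∑ a, jointProb π s a * g.r i s a

/-- The value function `V^{π^i,π^{-i}}` of agent `i` under profile `π`: the unique
solution of the Bellman equation `V = r^{i,π} + γ P^π V`, i.e. `(I − γP^π)⁻¹ r^{i,π}`. -/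
noncomputable def V (g : SG n S A) (π : Profile n S A) (i : Fin n) : Fin S → ℝ :=
  Matrix.mulVec (1 - g.γ • g.Pmat π)⁻¹ (g.rvec π i)

/-- The profile obtained from `π` by letting agent `i` play the pure action `a`
at state `s` (and `π i` at every other state). -/
def devProfile (π : Profile n S A) (i : Fin n) (s : Fin S) (a : Fin (A i)) : Profile n S A :=
  Function.update π i (fun t b => if t = s then (if b = a then (1 : ℝ) else 0) else π i t b)

/-- The one-step-deviation value `V^{π^i,π^{-i}}_{π^i(s,a)=1}(s)`. -/
noncomputable def Vdev (g : SG n S A) (π : Profile n S A) (i : Fin n) (s : Fin S)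
    (a : Fin (A i)) : ℝ :=
  g.V (devProfile π i s a) i s

/-- `D^{π}_{a}(s) = max(0, V^{π^i,π^{-i}}_{π^i(s,a)=1}(s) − V^{π^i,π^{-i}}(s))`. -/
noncomputable def D (g : SG n S A) (π : Profile n S A) (i : Fin n) (s : Fin S)
    (a : Fin (A i)) : ℝ :=
  max 0 (g.Vdev π i s a - g.V π i s)

/-- Nash's improvement map `f` on strategy profiles. -/
noncomputable def f (g : SG n S A) (π : Profile n S A) : Profile n S A :=
  fun i s a => (π i s a + g.D π i s a) / (1 + ∑ b, g.D π i s b)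

/-- `π` is a Markov perfect equilibrium: no agent can improve its value at any state
by unilaterally switching to another behavioral strategy. -/
def IsMPE (g : SG n S A) (π : Profile n S A) : Prop :=
  ∀ (s : Fin S) (i : Fin n) (σ : Fin S → Fin (A i) → ℝ),
    ((∀ t b, 0 ≤ σ t b) ∧ ∀ t, ∑ b, σ t b = 1) →
    g.V (Function.update π i σ) i s ≤ g.V π i s

/-- `π` is an `ε`-approximate Markov perfect equilibrium. -/
def IsApproxMPE (g : SG n S A) (π : Profile n S A) (ε : ℝ) : Prop :=
  ∀ (s : Fin S) (i : Fin n) (σ : Fin S → Fin (A i) → ℝ),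
    ((∀ t b, 0 ≤ σ t b) ∧ ∀ t, ∑ b, σ t b = 1) →
    g.V (Function.update π i σ) i s - ε ≤ g.V π i s

end SG

open scoped Matrix

section RowStochastic

variable {K ι : Type*} [Field K] [LinearOrder K] [IsStrictOrderedRing K] [Fintype ι]
  [DecidableEq ι] {P : Matrix ι ι K} {γ c : K} {u : ι → K}

lemma mulVec_apply_le_of_mem_rowStochastic (hP : P ∈ Matrix.rowStochastic K ι)
    (hu : ∀ t, u t ≤ c) (s : ι) : (P *ᵥ u) s ≤ c :=
  (convex_Iic c).sum_mem (fun _ _ => Matrix.nonneg_of_mem_rowStochastic hP)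
    (Matrix.sum_row_of_mem_rowStochastic hP s) fun t _ => hu t

lemma le_div_one_sub_of_le_add_mul_mulVec (hP : P ∈ Matrix.rowStochastic K ι) (hγ₀ : 0 ≤ γ)
    (hγ₁ : γ < 1) (hu : ∀ s, u s ≤ c + γ * (P *ᵥ u) s) (s : ι) : u s ≤ c / (1 - γ) := by
  obtain ⟨m, -, hm⟩ := exists_max_image univ u ⟨s, mem_univ s⟩
  have hPm : (P *ᵥ u) m ≤ u m := mulVec_apply_le_of_mem_rowStochastic hP (hm · (mem_univ _)) m
  have hum : u m ≤ c + γ * u m := (hu m).trans (by gcongr)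
  exact (hm s (mem_univ s)).trans <| (le_div_iff₀ (sub_pos.2 hγ₁)).2 (by linarith)

lemma isUnit_one_sub_smul_of_mem_rowStochastic (hP : P ∈ Matrix.rowStochastic K ι) (hγ₀ : 0 ≤ γ)
    (hγ₁ : γ < 1) : IsUnit (1 - γ • P) := by
  have nonpos_of_fixed : ∀ v : ι → K, v = γ • P *ᵥ v → ∀ s, v s ≤ 0 := fun v hv s => by
    simpa using le_div_one_sub_of_le_add_mul_mulVec hP hγ₀ hγ₁ (c := 0)
      (fun t => by simpa using (congrFun hv t).le) s
  rw [← Matrix.mulVec_injective_iff_isUnit]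
  refine (injective_iff_map_eq_zero (1 - γ • P).mulVecLin).2 fun v hv => ?_
  have hfixed : v = γ • P *ᵥ v := by
    simpa [Matrix.sub_mulVec, Matrix.smul_mulVec, sub_eq_zero] using hv
  have hfixed_neg : -v = γ • P *ᵥ -v := by rw [Matrix.mulVec_neg, smul_neg, ← hfixed]
  funext s
  exact le_antisymm (nonpos_of_fixed v hfixed s)
    (neg_nonpos.1 (nonpos_of_fixed (-v) hfixed_neg s))

end RowStochastic

lemma le_card_sub_one_mul_of_sum_eq_zero {R ι : Type*} [Ring R] [PartialOrder R]
    [IsOrderedAddMonoid R] [Fintype ι] {y : ι → R} {c : R} (hsum : ∑ b, y b = 0)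
    (hy : ∀ b, -c ≤ y b) (a : ι) : y a ≤ (Fintype.card ι - 1) * c := by
  have hle : y a + c ≤ ∑ b, (y b + c) :=
    single_le_sum (f := fun b => y b + c) (fun b _ => neg_le_iff_add_nonneg.1 (hy b)) (mem_univ a)
  rw [sum_add_distrib, hsum, zero_add, sum_const, card_univ, nsmul_eq_mul] at hle
  rw [sub_one_mul]
  exact le_sub_iff_add_le.2 hle

lemma le_add_sqrt_of_mul_sub_le {x e c : ℝ} (he : 0 ≤ e) (h : x * (x - e) ≤ c) :
    x ≤ e + √c := by
  rcases le_total x e with hxe | hex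
  · exact hxe.trans (le_add_of_nonneg_right (Real.sqrt_nonneg c))
  · have hsq : (x - e) ^ 2 ≤ c := by nlinarith
    exact sub_le_iff_le_add'.1 (Real.le_sqrt_of_sq_le hsq)

lemma sqrt_mul_le_add {a b : ℝ} (ha : 0 ≤ a) (hb : 0 ≤ b) : √(a * b) ≤ a + b :=
  Real.sqrt_le_iff.2 ⟨add_nonneg ha hb, by nlinarith [mul_nonneg ha hb]⟩

lemma add_sqrt_mul_le {N e a b : ℝ} (hN : 1 ≤ N) (he : 0 ≤ e) (ha : 0 ≤ a) (hb : 0 ≤ b) :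
    e + √(N * (e * (a * b))) ≤ N * (√e * b + a * √e + e) := by
  have hN₀ : 0 ≤ N := zero_le_one.trans hN
  calc e + √(N * (e * (a * b))) = e + √N * (√e * √(a * b)) := by
        rw [Real.sqrt_mul hN₀, Real.sqrt_mul he]
    _ ≤ N * e + N * (√e * (a + b)) := by
        gcongr
        · exact le_mul_of_one_le_left he hN
        · exact Real.sqrt_le_self_iff.2 (.inr hN)
        · exact sqrt_mul_le_add ha hb
    _ = N * (√e * b + a * √e + e) := by ring

namespace SG

variable {n S : ℕ} {A : Fin n → ℕ} {g : SG n S A} {π ρ : Profile n S A} {i : Fin n} {s : Fin S}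

lemma one_sub_γ_pos (g : SG n S A) : 0 < 1 - g.γ :=
  sub_pos.2 g.γ_lt_one

section StrategyProfiles

lemma IsProfile.update (hπ : IsProfile π) {σ : Fin S → Fin (A i) → ℝ} (hσ₀ : ∀ t b, 0 ≤ σ t b)
    (hσ₁ : ∀ t, ∑ b, σ t b = 1) : IsProfile (Function.update π i σ) := by
  constructor <;> intro j <;> rcases eq_or_ne j i with rfl | hj
  · simpa using hσ₀
  · simpa [hj] using hπ.1 j
  · simpa using hσ₁
  · simpa [hj] using hπ.2 j

lemma IsProfile.devProfile (hπ : IsProfile π) (s : Fin S) (a : Fin (A i)) :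
    IsProfile (devProfile π i s a) := by
  refine hπ.update (fun t b => ?_) fun t => ?_
  · split_ifs
    exacts [zero_le_one, le_rfl, hπ.1 i t b]
  · by_cases h : t = s
    · simp [h]
    · simp [h, hπ.2 i t]

lemma devProfile_apply_of_ne (π : Profile n S A) {t : Fin S} (h : t ≠ s) (a : Fin (A i))
    (j : Fin n) : devProfile π i s a j t = π j t := by
  rcases eq_or_ne j i with rfl | hj
  · simp [devProfile, h]
  · simp [devProfile, hj]

lemma jointProb_nonneg (hπ : IsProfile π) (s : Fin S) (a : ∀ i, Fin (A i)) :
    0 ≤ jointProb π s a :=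
  prod_nonneg fun i _ => hπ.1 i s (a i)

lemma sum_jointProb (hπ : IsProfile π) (s : Fin S) : ∑ a, jointProb π s a = 1 := by
  simp only [jointProb, ← Fintype.prod_sum, hπ.2, prod_const_one]

lemma jointProb_update (π : Profile n S A) (σ : Fin S → Fin (A i) → ℝ) (s : Fin S)
    (a : ∀ j, Fin (A j)) :
    jointProb (Function.update π i σ) s a = σ s (a i) * ∏ j ∈ univ.erase i, π j s (a j) := by
  rw [jointProb, ← mul_prod_erase univ _ (mem_univ i), Function.update_self]
  congr 1
  exact prod_congr rfl fun j hj => by rw [Function.update_of_ne (ne_of_mem_erase hj)]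

lemma jointProb_update_eq_sum_devProfile (π : Profile n S A) (σ : Fin S → Fin (A i) → ℝ)
    (s : Fin S) (a : ∀ j, Fin (A j)) :
    jointProb (Function.update π i σ) s a = ∑ b, σ s b * jointProb (devProfile π i s b) s a := by
  simp [devProfile, jointProb_update]

lemma Pmat_mem_rowStochastic (g : SG n S A) (hπ : IsProfile π) :
    g.Pmat π ∈ Matrix.rowStochastic ℝ (Fin S) := by
  refine Matrix.mem_rowStochastic_iff_sum.2 ⟨fun s t => ?_, fun s => ?_⟩
  · exact sum_nonneg fun a _ => mul_nonneg (jointProb_nonneg hπ s a) (g.P_nonneg s a t)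
  · simp only [Pmat]
    rw [sum_comm]
    simp only [← mul_sum, g.P_sum_one, mul_one, sum_jointProb hπ]

lemma rvec_nonneg (g : SG n S A) (hπ : IsProfile π) (i : Fin n) : 0 ≤ g.rvec π i :=
  fun s => sum_nonneg fun a _ => mul_nonneg (jointProb_nonneg hπ s a) (g.r_nonneg i s a)

lemma rvec_le (g : SG n S A) (hπ : IsProfile π) (i : Fin n) (s : Fin S) : g.rvec π i s ≤ g.Rmax :=
  (convex_Iic g.Rmax).sum_mem (fun a _ => jointProb_nonneg hπ s a) (sum_jointProb hπ s)
    fun a _ => g.r_le_Rmax i s a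

end StrategyProfiles

section BellmanOperator

/-- The Bellman operator `v ↦ r^{i,π} + γ P^π v` of agent `i`: the expected return when `π` is
played for one step and the state reached is then worth `v`. -/
noncomputable def bellmanOp (g : SG n S A) (π : Profile n S A) (i : Fin n) (v : Fin S → ℝ) :
    Fin S → ℝ :=
  g.rvec π i + g.γ • g.Pmat π *ᵥ v

lemma bellmanOp_zero : g.bellmanOp π i 0 = g.rvec π i := by
  simp [bellmanOp]

lemma bellmanOp_sub_bellmanOp (g : SG n S A) (π : Profile n S A) (i : Fin n)
    (v w : Fin S → ℝ) :
    g.bellmanOp π i v - g.bellmanOp π i w = g.γ • g.Pmat π *ᵥ (v - w) := by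
  rw [bellmanOp, bellmanOp, add_sub_add_left_eq_sub, ← smul_sub, Matrix.mulVec_sub]

lemma bellmanOp_mono (hπ : IsProfile π) : Monotone (g.bellmanOp π i) := fun v w hvw => by
  rw [← sub_nonneg, bellmanOp_sub_bellmanOp]
  exact smul_nonneg g.γ_nonneg <| Matrix.nonneg_mulVec_of_mem_rowStochastic
    (g.Pmat_mem_rowStochastic hπ) (sub_nonneg.2 hvw)

lemma bellmanOp_apply (v : Fin S → ℝ) (s : Fin S) :
    g.bellmanOp π i v s = ∑ a, jointProb π s a * (g.r i s a + g.γ * (g.P s a ⬝ᵥ v)) := by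
  simp only [bellmanOp, rvec, Pmat, Pi.add_apply, Pi.smul_apply, smul_eq_mul, Matrix.mulVec,
    dotProduct, mul_add, sum_add_distrib, sum_mul, mul_sum]
  congr 1
  rw [sum_comm]
  exact sum_congr rfl fun a _ => sum_congr rfl fun t _ => by ring

lemma bellmanOp_apply_congr (h : ∀ j, π j s = ρ j s) (v : Fin S → ℝ) :
    g.bellmanOp π i v s = g.bellmanOp ρ i v s := by
  simp only [bellmanOp_apply, jointProb, h]

lemma bellmanOp_update_apply (σ : Fin S → Fin (A i) → ℝ) (v : Fin S → ℝ) (s : Fin S) :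
    g.bellmanOp (Function.update π i σ) i v s
      = ∑ b, σ s b * g.bellmanOp (devProfile π i s b) i v s := by
  simp only [bellmanOp_apply, jointProb_update_eq_sum_devProfile, sum_mul, mul_sum]
  rw [sum_comm]
  simp only [mul_assoc]

lemma bellmanOp_V (hπ : IsProfile π) : g.bellmanOp π i (g.V π i) = g.V π i := by
  have hunit : IsUnit (1 - g.γ • g.Pmat π).det := (Matrix.isUnit_iff_isUnit_det _).1 <|
    isUnit_one_sub_smul_of_mem_rowStochastic (g.Pmat_mem_rowStochastic hπ) g.γ_nonneg g.γ_lt_one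
  have hV : (1 - g.γ • g.Pmat π) *ᵥ g.V π i = g.rvec π i := by
    rw [V, Matrix.mulVec_mulVec, Matrix.mul_nonsing_inv _ hunit, Matrix.one_mulVec]
  rw [Matrix.sub_mulVec, Matrix.one_mulVec, Matrix.smul_mulVec, sub_eq_iff_eq_add] at hV
  exact hV.symm

lemma V_le_add_div_of_bellmanOp_le_add (hπ : IsProfile π) {v : Fin S → ℝ} {c : ℝ}
    (hv : ∀ t, g.bellmanOp π i v t ≤ v t + c) (s : Fin S) :
    g.V π i s ≤ v s + c / (1 - g.γ) := by
  refine sub_le_iff_le_add'.1 <| le_div_one_sub_of_le_add_mul_mulVec (u := g.V π i - v)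
    (g.Pmat_mem_rowStochastic hπ) g.γ_nonneg g.γ_lt_one (fun t => ?_) s
  have hdiff := congrFun (g.bellmanOp_sub_bellmanOp π i (g.V π i) v) t
  rw [bellmanOp_V hπ] at hdiff
  simp only [Pi.sub_apply, Pi.smul_apply, smul_eq_mul] at hdiff ⊢
  linarith [hv t]

lemma V_le_of_bellmanOp_le (hπ : IsProfile π) {v : Fin S → ℝ} (hv : g.bellmanOp π i v ≤ v) :
    g.V π i ≤ v := fun s => by
  simpa using V_le_add_div_of_bellmanOp_le_add hπ (c := 0) (fun t => by simpa using hv t) s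

lemma le_V_of_le_bellmanOp (hπ : IsProfile π) {v : Fin S → ℝ} (hv : v ≤ g.bellmanOp π i v) :
    v ≤ g.V π i := fun s => by
  have hgap : (v - g.V π i) s ≤ 0 / (1 - g.γ) := by
    refine le_div_one_sub_of_le_add_mul_mulVec (g.Pmat_mem_rowStochastic hπ) g.γ_nonneg
      g.γ_lt_one (fun t => ?_) s
    have hdiff := congrFun (g.bellmanOp_sub_bellmanOp π i v (g.V π i)) t
    rw [bellmanOp_V hπ] at hdiff
    simp only [Pi.sub_apply, Pi.smul_apply, smul_eq_mul] at hdiff ⊢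
    linarith [hv t]
  simpa using hgap

lemma V_nonneg (g : SG n S A) (hπ : IsProfile π) (i : Fin n) : 0 ≤ g.V π i :=
  le_V_of_le_bellmanOp hπ (bellmanOp_zero.symm ▸ g.rvec_nonneg hπ i)

lemma V_le (g : SG n S A) (hπ : IsProfile π) (i : Fin n) (s : Fin S) :
    g.V π i s ≤ g.Rmax / (1 - g.γ) := by
  simpa using V_le_add_div_of_bellmanOp_le_add (v := 0) (i := i) hπ
    (fun t => by simpa [bellmanOp_zero] using g.rvec_le hπ i t) s

end BellmanOperator

section Advantage

/-- The advantage of action `a` at state `s`: the gain of agent `i` from playing `a` once at `s`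
and following `π` from the next step on, including at later visits to `s`. -/
noncomputable def advantage (g : SG n S A) (π : Profile n S A) (i : Fin n) (s : Fin S)
    (a : Fin (A i)) : ℝ :=
  g.bellmanOp (devProfile π i s a) i (g.V π i) s - g.V π i s

lemma sum_mul_advantage {σ : Fin S → Fin (A i) → ℝ} (hσ : ∑ b, σ s b = 1) :
    ∑ b, σ s b * g.advantage π i s b
      = g.bellmanOp (Function.update π i σ) i (g.V π i) s - g.V π i s := by
  simp only [advantage, mul_sub, sum_sub_distrib, ← sum_mul, hσ, one_mul, bellmanOp_update_apply]

lemma sum_strategy_mul_advantage (hπ : IsProfile π) :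
    ∑ b, π i s b * g.advantage π i s b = 0 := by
  rw [sum_mul_advantage (hπ.2 i s), Function.update_eq_self, bellmanOp_V hπ, sub_self]

lemma neg_le_advantage (hπ : IsProfile π) (a : Fin (A i)) :
    -(g.Rmax / (1 - g.γ)) ≤ g.advantage π i s a := by
  have hdev := hπ.devProfile s a
  have hnonneg : 0 ≤ g.bellmanOp (devProfile π i s a) i (g.V π i) :=
    (bellmanOp_zero.symm ▸ g.rvec_nonneg hdev i).trans (bellmanOp_mono hdev (g.V_nonneg hπ i))
  calc -(g.Rmax / (1 - g.γ)) ≤ -g.V π i s := neg_le_neg (g.V_le hπ i s)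
    _ ≤ g.advantage π i s a := neg_le_sub_iff_le_add.2 (le_add_of_nonneg_left (hnonneg s))

lemma bellmanOp_devProfile_V (hπ : IsProfile π) (a : Fin (A i)) :
    g.bellmanOp (devProfile π i s a) i (g.V π i)
      = g.V π i + Pi.single s (g.advantage π i s a) := by
  funext t
  rcases eq_or_ne t s with rfl | ht
  · simp [advantage]
  · rw [bellmanOp_apply_congr (devProfile_apply_of_ne π ht a), bellmanOp_V hπ]
    simp [ht]

lemma V_update_le_of_advantage_le (hπ : IsProfile π) {σ : Fin S → Fin (A i) → ℝ}
    (hσ₀ : ∀ t b, 0 ≤ σ t b) (hσ₁ : ∀ t, ∑ b, σ t b = 1) {c : ℝ}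
    (hc : ∀ t b, g.advantage π i t b ≤ c) (s : Fin S) :
    g.V (Function.update π i σ) i s ≤ g.V π i s + c / (1 - g.γ) := by
  refine V_le_add_div_of_bellmanOp_le_add (hπ.update hσ₀ hσ₁) (fun t => ?_) s
  rw [← sub_le_iff_le_add', ← sum_mul_advantage (hσ₁ t)]
  exact (convex_Iic c).sum_mem (fun b _ => hσ₀ t b) (hσ₁ t) fun b _ => hc t b

end Advantage

section DeviationGain

lemma D_nonneg (g : SG n S A) (π : Profile n S A) (i : Fin n) (s : Fin S) (a : Fin (A i)) :
    0 ≤ g.D π i s a :=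
  le_max_left _ _

lemma D_le (g : SG n S A) (hπ : IsProfile π) (s : Fin S) (a : Fin (A i)) :
    g.D π i s a ≤ g.Rmax / (1 - g.γ) :=
  max_le ((g.V_nonneg hπ i s).trans (g.V_le hπ i s))
    ((sub_le_self _ (g.V_nonneg hπ i s)).trans (g.V_le (hπ.devProfile s a) i s))

lemma D_eq_zero_of_advantage_nonpos (hπ : IsProfile π) {a : Fin (A i)}
    (ha : g.advantage π i s a ≤ 0) : g.D π i s a = 0 := by
  have hdev : g.V (devProfile π i s a) i ≤ g.V π i := by
    apply V_le_of_bellmanOp_le (hπ.devProfile s a)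
    rw [bellmanOp_devProfile_V hπ]
    exact add_le_of_nonpos_right (Pi.single_nonpos.2 ha)
  exact max_eq_left (sub_nonpos.2 (hdev s))

lemma advantage_le_D (g : SG n S A) (hπ : IsProfile π) (s : Fin S) (a : Fin (A i)) :
    g.advantage π i s a ≤ g.D π i s a := by
  rcases le_total (g.advantage π i s a) 0 with ha | ha
  · exact ha.trans (g.D_nonneg π i s a)
  · have hdev := hπ.devProfile s a
    have hV : g.V π i ≤ g.V (devProfile π i s a) i := by
      apply le_V_of_le_bellmanOp hdev
      rw [bellmanOp_devProfile_V hπ]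
      exact le_add_of_nonneg_right (Pi.single_nonneg.2 ha)
    have hstep : g.bellmanOp (devProfile π i s a) i (g.V π i) ≤ g.V (devProfile π i s a) i :=
      (bellmanOp_mono hdev hV).trans_eq (bellmanOp_V hdev)
    exact (sub_le_sub_right (hstep s) _).trans (le_max_right _ _)

lemma le_Amax (A : Fin n → ℕ) (i : Fin n) : A i ≤ Amax A :=
  le_sup (mem_univ i)

lemma Rmax_nonneg (g : SG n S A) (hπ : IsProfile π) (i : Fin n) (s : Fin S) : 0 ≤ g.Rmax :=
  (g.rvec_nonneg hπ i s).trans (g.rvec_le hπ i s)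

lemma sum_D_le (hπ : IsProfile π) : ∑ b, g.D π i s b ≤ Amax A * g.Rmax / (1 - g.γ) := by
  have hR := g.Rmax_nonneg hπ i s
  have hγ := g.one_sub_γ_pos
  calc ∑ b, g.D π i s b ≤ A i * (g.Rmax / (1 - g.γ)) := by
        simpa using sum_le_card_nsmul univ _ _ fun b _ => g.D_le hπ s b
    _ ≤ Amax A * (g.Rmax / (1 - g.γ)) := by
        gcongr
        exact le_Amax A i
    _ = Amax A * g.Rmax / (1 - g.γ) := (mul_div_assoc _ _ _).symm

end DeviationGain

section ApproximateFixedPoint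

lemma f_sub_mul_one_add_sum_D (g : SG n S A) (π : Profile n S A) (i : Fin n) (s : Fin S)
    (b : Fin (A i)) :
    (g.f π i s b - π i s b) * (1 + ∑ c, g.D π i s c)
      = g.D π i s b - π i s b * ∑ c, g.D π i s c := by
  have hne : 1 + ∑ c, g.D π i s c ≠ 0 :=
    (add_pos_of_pos_of_nonneg one_pos (sum_nonneg fun c _ => g.D_nonneg π i s c)).ne'
  rw [f, sub_mul, div_mul_cancel₀ _ hne]
  ring

lemma abs_D_sub_mul_sum_D_le (hπ : IsProfile π) {ε : ℝ} {b : Fin (A i)}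
    (hfix : |g.f π i s b - π i s b| ≤ ε) :
    |g.D π i s b - π i s b * ∑ c, g.D π i s c|
      ≤ ε * (1 + Amax A * g.Rmax / (1 - g.γ)) := by
  have hsum : 0 ≤ 1 + ∑ c, g.D π i s c :=
    add_nonneg zero_le_one (sum_nonneg fun c _ => g.D_nonneg π i s c)
  rw [← f_sub_mul_one_add_sum_D, abs_mul, abs_of_nonneg hsum]
  exact mul_le_mul hfix (by gcongr; exact sum_D_le hπ) hsum ((abs_nonneg _).trans hfix)

lemma neg_mul_le_mul_sum_D_mul_advantage (hπ : IsProfile π) {e : ℝ} {b : Fin (A i)}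
    (he : |g.D π i s b - π i s b * ∑ c, g.D π i s c| ≤ e) :
    -(e * (g.Rmax / (1 - g.γ))) ≤ (π i s b * ∑ c, g.D π i s c) * g.advantage π i s b := by
  have he₀ : 0 ≤ e := (abs_nonneg _).trans he
  have hbound : 0 ≤ g.Rmax / (1 - g.γ) := (g.V_nonneg hπ i s).trans (g.V_le hπ i s)
  have hweight : 0 ≤ π i s b * ∑ c, g.D π i s c :=
    mul_nonneg (hπ.1 i s b) (sum_nonneg fun c _ => g.D_nonneg π i s c)
  rcases le_total 0 (g.advantage π i s b) with hb | hb
  · exact (neg_nonpos.2 (mul_nonneg he₀ hbound)).trans (mul_nonneg hweight hb)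
  · rw [D_eq_zero_of_advantage_nonpos hπ hb, zero_sub, abs_neg, abs_of_nonneg hweight] at he
    rw [neg_le, ← mul_neg]
    exact mul_le_mul he (neg_le.1 (neg_le_advantage hπ b)) (neg_nonneg.2 hb) he₀

lemma advantage_mul_sub_le (hπ : IsProfile π) {e : ℝ}
    (he : ∀ b, |g.D π i s b - π i s b * ∑ c, g.D π i s c| ≤ e) {a : Fin (A i)}
    (ha : 0 ≤ g.advantage π i s a) :
    g.advantage π i s a * (g.advantage π i s a - e)
      ≤ (A i - 1) * (e * (g.Rmax / (1 - g.γ))) := by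
  set weight : Fin (A i) → ℝ := fun b => π i s b * ∑ c, g.D π i s c
  have hsum : ∑ b, weight b * g.advantage π i s b = 0 := by
    simp only [weight, mul_right_comm _ (∑ c, g.D π i s c), ← sum_mul,
      sum_strategy_mul_advantage hπ, zero_mul]
  have hweight : g.advantage π i s a - e ≤ weight a := by
    linarith [g.advantage_le_D hπ s a, (abs_le.1 (he a)).2]
  calc g.advantage π i s a * (g.advantage π i s a - e)
      ≤ weight a * g.advantage π i s a := by
        rw [mul_comm]
        gcongr
    _ ≤ (A i - 1) * (e * (g.Rmax / (1 - g.γ))) := by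
        simpa using le_card_sub_one_mul_of_sum_eq_zero hsum
          (fun b => neg_mul_le_mul_sum_D_mul_advantage hπ (he b)) a

lemma advantage_le (hπ : IsProfile π) {e : ℝ}
    (he : ∀ b, |g.D π i s b - π i s b * ∑ c, g.D π i s c| ≤ e) (a : Fin (A i)) :
    g.advantage π i s a ≤ Amax A * (√e / (1 - g.γ) + g.Rmax * √e + e) := by
  have he₀ : 0 ≤ e := (abs_nonneg _).trans (he a)
  have hR := g.Rmax_nonneg hπ i s
  have hγ : 0 ≤ (1 - g.γ)⁻¹ := inv_nonneg.2 g.one_sub_γ_pos.le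
  have hA : (1 : ℝ) ≤ Amax A := Nat.one_le_cast.2 (a.pos.trans_le (le_Amax A i))
  have hsqrt := add_sqrt_mul_le hA he₀ hR hγ
  rw [← div_eq_mul_inv, ← div_eq_mul_inv] at hsqrt
  refine le_trans ?_ hsqrt
  rcases le_total (g.advantage π i s a) 0 with ha | ha
  · exact ha.trans (add_nonneg he₀ (Real.sqrt_nonneg _))
  · refine le_add_sqrt_of_mul_sub_le he₀ ((advantage_mul_sub_le hπ he ha).trans ?_)
    have hbound : 0 ≤ g.Rmax / (1 - g.γ) := div_nonneg hR g.one_sub_γ_pos.le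
    gcongr
    exact (sub_le_self _ zero_le_one).trans (Nat.cast_le.2 (le_Amax A i))

end ApproximateFixedPoint

end SG

open SG in
/-- an `ε`-approximate fixed point of `f` is a
`A_max(√ε'/(1−γ) + R_max√ε' + ε')/(1−γ)`-approximate MPE, `ε' = ε(1 + A_max R_max/(1−γ))`. -/
theorem isApproxMPE_of_approxFixedPt {n S : ℕ} {A : Fin n → ℕ} (g : SG n S A)
    (π : Profile n S A) (hπ : IsProfile π)
    (ε : ℝ) (hε : 0 < ε) (hfix : ∀ i s a, |g.f π i s a - π i s a| ≤ ε)
    (ε' : ℝ) (hε' : ε' = ε * (1 + (Amax A : ℝ) * g.Rmax / (1 - g.γ))) :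
    g.IsApproxMPE π
      ((Amax A : ℝ) * (Real.sqrt ε' / (1 - g.γ) + g.Rmax * Real.sqrt ε' + ε') / (1 - g.γ)) := by
  intro s i σ hσ
  have hadv : ∀ t a, g.advantage π i t a
      ≤ Amax A * (√ε' / (1 - g.γ) + g.Rmax * √ε' + ε') := fun t a =>
    advantage_le hπ (fun b => hε' ▸ abs_D_sub_mul_sum_D_le hπ (hfix i t b)) a
  exact sub_le_iff_le_add.2 (V_update_le_of_advantage_le hπ hσ.1 hσ.2 hadv s)
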